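/- arXiv:1809.04802 — 2 statements merged into one kernel-verified Lean document; each statement's English description precedes it below -/
import Mathlib

section
/- Let G=(V,E) be a finite undirected graph and let lₑ, rₑ (for e ∈ E) satisfy 0 < lₑ ≤ rₑ for every e ∈ E. Let w⁻ = (lₑ)ₑ∈E and let S⁻ ⊆ V be a nonempty subset maximizing the density f_{w⁻}. Then for every edge-weight vector w with lₑ ≤ wₑ ≤ rₑ for all e ∈ E, and every nonempty subset T ⊆ V, it holds that f_w(S⁻) ≥ (min_{e∈E} lₑ/rₑ) · f_w(T). In particular, the robust ratio of S⁻ under the edge-weight space W = ∏_{e∈E}[lₑ, rₑ] is at least 1/(max_{e∈E} rₑ/lₑ). -/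
open Finset
open scoped Classical

/-- The set of edges of `G` whose both endpoints lie in `S`, i.e. `E(S)`. -/
noncomputable def edgesIn {V : Type*} [Fintype V] (G : SimpleGraph V) (S : Finset V) :
    Finset (Sym2 V) :=
  G.edgeFinset.filter (fun e => ∀ v ∈ e, v ∈ S)

/-- The density `f_w(S) = w(S) / |S|` of the subgraph induced by `S`. -/
noncomputable def density {V : Type*} [Fintype V] (G : SimpleGraph V) (w : Sym2 V → ℝ)
    (S : Finset V) : ℝ :=
  (∑ e ∈ edgesIn G S, w e) / (S.card : ℝ)

section

variable {V : Type*} [Fintype V] {G : SimpleGraph V} {w w' : Sym2 V → ℝ} {S : Finset V}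

theorem edgesIn_subset_edgeFinset : edgesIn G S ⊆ G.edgeFinset :=
  filter_subset _ _

theorem density_const_mul (c : ℝ) : density G (fun e => c * w e) S = c * density G w S := by
  rw [density, density, ← mul_sum, mul_div_assoc]

theorem density_le_density (h : ∀ e ∈ edgesIn G S, w e ≤ w' e) :
    density G w S ≤ density G w' S :=
  div_le_div_of_nonneg_right (sum_le_sum h) (Nat.cast_nonneg _)

end

/-- Performance guarantee of the basic algorithm: if `0 < lₑ ≤ rₑ` for all edges,
`S⁻` is a densest subgraph with respect to `w⁻ = (lₑ)`, and `ρ` is a lower bound on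
`lₑ/rₑ` over all edges (in particular `ρ = min_{e∈E} lₑ/rₑ`), then for every
edge-weight vector `w ∈ ∏ₑ[lₑ, rₑ]` and every nonempty `T ⊆ V`,
`f_w(S⁻) ≥ ρ · f_w(T)`; i.e. the robust ratio of `S⁻` is at least `1/(max_{e∈E} rₑ/lₑ)`. -/
theorem basic_algorithm_robust_ratio {V : Type*} [Fintype V] (G : SimpleGraph V)
    (l r : Sym2 V → ℝ)
    (hlr : ∀ e ∈ G.edgeFinset, 0 < l e ∧ l e ≤ r e)
    (Sm : Finset V) (hSm : Sm.Nonempty)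
    (hSmOpt : ∀ T : Finset V, T.Nonempty → density G l T ≤ density G l Sm)
    (ρ : ℝ) (hρ : ∀ e ∈ G.edgeFinset, ρ ≤ l e / r e)
    (w : Sym2 V → ℝ) (hw : ∀ e ∈ G.edgeFinset, l e ≤ w e ∧ w e ≤ r e)
    (T : Finset V) (hT : T.Nonempty) :
    ρ * density G w T ≤ density G w Sm := by
  have mul_weight_le : ∀ e ∈ G.edgeFinset, ρ * w e ≤ l e := by
    intro e he
    have l_pos : 0 < l e := (hlr e he).1
    have w_pos : 0 < w e := l_pos.trans_le (hw e he).1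
    have ratio_le : ρ ≤ l e / w e :=
      (hρ e he).trans (div_le_div_of_nonneg_left l_pos.le w_pos (hw e he).2)
    exact (le_div_iff₀ w_pos).1 ratio_le
  calc ρ * density G w T
      = density G (fun e => ρ * w e) T := (density_const_mul ρ).symm
    _ ≤ density G l T :=
        density_le_density fun e he => mul_weight_le e (edgesIn_subset_edgeFinset he)
    _ ≤ density G l Sm := hSmOpt T hT
    _ ≤ density G w Sm :=
        density_le_density fun e he => (hw e (edgesIn_subset_edgeFinset he)).1
end

section
/- Let G=(V,E) be a finite undirected graph with n = |V| vertices, in which every vertex has degree at least one and such that |E(S)| ≤ α·|S| holds for every subset S ⊆ V, for some constant α > 0. Let W = ∏_{e∈E}[l, r] be the edge-weight space with the same interval [l, r] for every edge, where 0 < l ≤ r and n ≥ r/l. Then the robust ratio of the full vertex set V under W is strictly less than 2(α + 1)·(l/r). -/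
open Finset
open scoped Classical

/-! Raise a single edge `uv` inside `S` to weight `r` and keep all other edges at `l`. The pair
`{u, v}` alone has density `r / 2`, so the densest subgraph has at least that density. The raised
edge adds only `r - l` to the total weight of `S`, and this is less than `l * |S|` when
`|S| ≥ r / l`; hence `S` has density less than `l * (α + 1)`. -/

section SpikeWeight

variable {ι : Type*} {l r : ℝ}

/-- The weight vector equal to `r` at `i₀` and to `l` elsewhere; with `i₀` an edge of `S`, this is
the choice of weights in `[l, r]` that witnesses a small robust ratio of `S`. -/
noncomputable def spikeWeight (l r : ℝ) (i₀ : ι) : ι → ℝ :=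
  Function.update (fun _ ↦ l) i₀ r

lemma spikeWeight_self (l r : ℝ) (i₀ : ι) : spikeWeight l r i₀ i₀ = r :=
  Function.update_self ..

lemma spikeWeight_mem_Icc (hlr : l ≤ r) (i₀ i : ι) : spikeWeight l r i₀ i ∈ Set.Icc l r := by
  rcases eq_or_ne i i₀ with rfl | hi
  · simpa [spikeWeight] using hlr
  · simpa [spikeWeight, hi] using hlr

lemma sum_spikeWeight (l r : ℝ) {s : Finset ι} {i₀ : ι} (hi₀ : i₀ ∈ s) :
    ∑ i ∈ s, spikeWeight l r i₀ i = #s * l + (r - l) := by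
  have hcard : (#(s \ {i₀}) : ℝ) = #s - 1 := by
    rw [cast_card_sdiff (singleton_subset_iff.mpr hi₀), card_singleton, Nat.cast_one]
  simp only [spikeWeight, sum_update_of_mem hi₀, sum_const, nsmul_eq_mul, hcard]
  ring

end SpikeWeight

section Density

variable {V : Type*} [Fintype V] {G : SimpleGraph V} {S : Finset V} {u v : V}

lemma mk_mem_edgesIn : s(u, v) ∈ edgesIn G S ↔ G.Adj u v ∧ u ∈ S ∧ v ∈ S := by
  simp [edgesIn]

lemma edgesIn_univ_nonempty (hv : 0 < G.degree v) : (edgesIn G univ).Nonempty := by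
  obtain ⟨u, hvu⟩ := (G.degree_pos_iff_exists_adj v).mp hv
  exact ⟨s(v, u), mk_mem_edgesIn.mpr ⟨hvu, mem_univ v, mem_univ u⟩⟩

lemma edgesIn_pair (huv : G.Adj u v) : edgesIn G {u, v} = {s(u, v)} := by
  ext e
  induction e with | h a b
  have ne_of_adj : G.Adj a b → a ≠ b := SimpleGraph.Adj.ne
  have adj_swap : G.Adj v u := huv.symm
  simp only [mk_mem_edgesIn, mem_insert, mem_singleton, Sym2.eq_iff]
  grind

lemma density_pair (huv : G.Adj u v) (w : Sym2 V → ℝ) :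
    density G w {u, v} = w s(u, v) / 2 := by
  simp [density, edgesIn_pair huv, card_pair huv.ne]

lemma density_nonneg {w : Sym2 V → ℝ} (hw : ∀ e ∈ edgesIn G S, 0 ≤ w e) : 0 ≤ density G w S :=
  div_nonneg (sum_nonneg hw) (Nat.cast_nonneg _)

lemma exists_forall_density_le [Nonempty V] (G : SimpleGraph V) (w : Sym2 V → ℝ) :
    ∃ T : Finset V, T.Nonempty ∧
      ∀ U : Finset V, U.Nonempty → density G w U ≤ density G w T := by
  simpa using exists_max_image {U : Finset V | U.Nonempty} (density G w) ⟨univ, by simp⟩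

lemma density_spikeWeight_lt {α l r : ℝ} (hl : 0 < l) (hS : #(edgesIn G S) ≤ α * #S)
    (hcard : r / l ≤ #S) {e₀ : Sym2 V} (he₀ : e₀ ∈ edgesIn G S) :
    density G (spikeWeight l r e₀) S < l * (α + 1) := by
  have S_nonempty : S.Nonempty := ⟨_, (mem_filter.mp he₀).2 _ e₀.out_fst_mem⟩
  rw [density, sum_spikeWeight l r he₀, div_lt_iff₀ (mod_cast S_nonempty.card_pos)]
  have edges_le : #(edgesIn G S) * l ≤ α * #S * l := mul_le_mul_of_nonneg_right hS hl.le
  have spike_le : r ≤ #S * l := (div_le_iff₀ hl).mp hcard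
  linarith

end Density

theorem robust_ratio_lt_of_univ_general {V : Type*} [Fintype V] (G : SimpleGraph V)
    (S : Finset V) (hne : (edgesIn G S).Nonempty)
    (α : ℝ) (hsparse : (#(edgesIn G S) : ℝ) ≤ α * #S)
    (l r : ℝ) (hl : 0 < l) (hlr : l ≤ r) (hcard : r / l ≤ #S) :
    ∃ w : Sym2 V → ℝ,
      (∀ e ∈ G.edgeFinset, l ≤ w e ∧ w e ≤ r) ∧
      ∃ T : Finset V, T.Nonempty ∧
        (∀ U : Finset V, U.Nonempty → density G w U ≤ density G w T) ∧
        density G w S / density G w T < 2 * (α + 1) * (l / r) := by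
  obtain ⟨⟨u, v⟩, he⟩ := hne
  have huv : G.Adj u v := (mk_mem_edgesIn.mp he).1
  have : Nonempty V := ⟨u⟩
  have hr : 0 < r := hl.trans_le hlr
  let w := spikeWeight l r s(u, v)
  have w_mem (e : Sym2 V) : l ≤ w e ∧ w e ≤ r := spikeWeight_mem_Icc hlr _ e
  obtain ⟨T, hT, T_densest⟩ := exists_forall_density_le G w
  refine ⟨w, fun e _ ↦ w_mem e, T, hT, T_densest, ?_⟩
  have density_T_ge : r / 2 ≤ density G w T := by
    simpa only [density_pair huv, w, spikeWeight_self] using T_densest {u, v} (by simp)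
  have density_S_nonneg : 0 ≤ density G w S := density_nonneg fun e _ ↦ hl.le.trans (w_mem e).1
  calc density G w S / density G w T
      ≤ density G w S / (r / 2) := by gcongr
    _ < l * (α + 1) / (r / 2) := by gcongr; exact density_spikeWeight_lt hl hsparse hcard he
    _ = 2 * (α + 1) * (l / r) := by field_simp

/-- Tightness of the basic algorithm's guarantee for the full vertex set: suppose every
vertex of `G` has degree at least one and `|E(S)| ≤ α · |S|` for every `S ⊆ V`, with
`α > 0`. Let the edge-weight space be `W = ∏ₑ[l, r]` with `0 < l ≤ r` and `n ≥ r/l`,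
where `n = |V|`. Then the robust ratio of `V` under `W` is strictly less than
`2(α + 1) · (l/r)`: there is a weight vector `w ∈ W` and a densest subgraph `T`
with respect to `w` such that `f_w(V) / f_w(T) < 2(α + 1) · (l/r)`. -/
theorem robust_ratio_lt_of_univ {V : Type*} [Fintype V] (G : SimpleGraph V)
    (hdeg : ∀ v : V, 0 < G.degree v)
    (α : ℝ) (hα : 0 < α)
    (hsparse : ∀ S : Finset V, ((edgesIn G S).card : ℝ) ≤ α * S.card)
    (l r : ℝ) (hl : 0 < l) (hlr : l ≤ r)
    (hn : r / l ≤ (Fintype.card V : ℝ)) :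
    ∃ w : Sym2 V → ℝ,
      (∀ e ∈ G.edgeFinset, l ≤ w e ∧ w e ≤ r) ∧
      ∃ T : Finset V, T.Nonempty ∧
        (∀ U : Finset V, U.Nonempty → density G w U ≤ density G w T) ∧
        density G w (Finset.univ : Finset V) / density G w T < 2 * (α + 1) * (l / r) := by
  obtain ⟨v⟩ : Nonempty V := Fintype.card_pos_iff.mp <|
    mod_cast (div_pos (hl.trans_le hlr) hl).trans_le hn
  exact robust_ratio_lt_of_univ_general G univ (edgesIn_univ_nonempty (hdeg v)) α (hsparse univ)
    l r hl hlr hn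
end
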